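/- Let α ∈ (1,2), let X be a real Banach space, let b > 0, and let g : (0,∞) → bounded linear operators on X be strongly continuous on (0,b] with lim_{t→0+} t^{2-α} g(t)x = x/Γ(α-1) for every x ∈ X, and g(t) = 0 for t > b. For x ∈ X set K(σ,τ)x := (σ^{α-2}/Γ(α-1)) J_τ^α g(τ)x − (τ^{α-2}/Γ(α-1)) J_σ^α g(σ)x and L(t,s)x := Γ(2-α) ∫_0^{t+s} g(σ)x dσ. Then for every x ∈ X and all t,s > 0, ∫_0^t ∫_0^s (t-σ)^{1-α} K(σ,τ)x dτ dσ + ∫_0^t ∫_0^s (s-τ)^{1-α} K(σ,τ)x dτ dσ − ∫_0^t ∫_0^s (t+s-σ-τ)^{1-α} K(σ,τ)x dτ dσ = J_s^α L(t,s)x − J_t^α L(t,s)x, where J_t^α (resp. J_s^α) denotes Riemann-Liouville fractional integration of order α with respect to the variable t (resp. s), i.e. J_t^α L(t,s)x = (1/Γ(α)) ∫_0^t (t-r)^{α-1} L(r,s)x dr. -/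

import Mathlib

/-!
The identity holds for every locally integrable `f : (0, ∞) → X` in place of the orbit
`u ↦ g u x`; write `F = J¹ f`. By Fubini the left-hand side is `P(t, s) - P(s, t)`, where
`P(t, s)` is the contribution of the summand `σ^{α-2}/Γ(α-1) · J^α f(τ)` of `K`
(`integral_antisymm`). The claim follows from
`P(t, s) = Γ(2-α) (∫₀^{t+s} J^α f - J^α[F(s + ·)](t))` (`half_identity`), since the first term is
symmetric in `(t, s)` and the second ones form the right-hand side.

The only difficult integral in `P` has the weight `(t+s-σ-τ)^{1-α}`. For fixed `σ`, the
`τ`-integral over the whole of `[0, t+s-σ]` would be `Γ(2-α) J² f(t+s-σ)`, and the superfluous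
part over `[s, t+s-σ]` is `Γ(2-α)` times a fractional integral of order `2-α` of the shifted
function `J^α f(s + ·)` (`inner_integral`). Expanding also
`J² f(s + ρ) = J² f(s) + J¹[F(s + ·)](ρ)`, the `σ`-integral becomes a combination of
`J^{α-1} J¹ = J^α` and `J^{α-1} J^{2-α} = J¹` (`double_integral_sum`).

Everything thus rests on the semigroup law `J^p J^q = J^{p+q}` for integrable functions when
`p + q ≥ 1` (`RLint_RLint`), i.e. on Fubini on a triangle and Euler's beta integral.
-/

open MeasureTheory Filter Topology Set

/-- Riemann-Liouville fractional integral of order `β` of `f` at `t`. -/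
noncomputable def RLint {X : Type*} [NormedAddCommGroup X] [NormedSpace ℝ X]
    (β t : ℝ) (f : ℝ → X) : X :=
  (Real.Gamma β)⁻¹ • ∫ σ in (0:ℝ)..t, (t - σ) ^ (β - 1) • f σ

/-! ### The beta integral -/

/-- Euler's beta integral on an arbitrary interval `[u, T]`. -/
lemma integral_beta_kernel {p q : ℝ} (hp : 0 < p) (hq : 0 < q) {u T : ℝ} (huT : u < T) :
    ∫ τ in u..T, (T - τ) ^ (p - 1) * (τ - u) ^ (q - 1) =
      (T - u) ^ (p + q - 1) * ProbabilityTheory.beta p q := by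
  have ha : 0 < T - u := sub_pos.2 huT
  have h0 : ∫ x in (0:ℝ)..(T - u), ((T - u) - x) ^ (p - 1) * x ^ (q - 1) =
      (T - u) ^ (p + q - 1) * ProbabilityTheory.beta p q := by
    have h := Complex.betaIntegral_scaled (q : ℂ) (p : ℂ) ha
    rw [Complex.betaIntegral_symm] at h
    rw [ProbabilityTheory.beta_eq_betaIntegralReal p q hp hq]
    have h1 : ∫ x in (0:ℝ)..(T - u),
          (x : ℂ) ^ ((q : ℂ) - 1) * (((T - u : ℝ) : ℂ) - x) ^ ((p : ℂ) - 1) =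
        ((∫ x in (0:ℝ)..(T - u), ((T - u) - x) ^ (p - 1) * x ^ (q - 1) : ℝ) : ℂ) := by
      rw [← intervalIntegral.integral_ofReal]
      refine intervalIntegral.integral_congr fun x hx => ?_
      rw [uIcc_of_le ha.le] at hx
      have e1 : (x : ℂ) ^ ((q : ℂ) - 1) = ((x ^ (q - 1) : ℝ) : ℂ) := by
        rw [Complex.ofReal_cpow hx.1]; push_cast; rfl
      have e2 : (((T - u : ℝ) : ℂ) - x) ^ ((p : ℂ) - 1) =
          ((((T - u) - x) ^ (p - 1) : ℝ) : ℂ) := by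
        rw [Complex.ofReal_cpow (sub_nonneg.2 hx.2)]; push_cast; rfl
      simp only [e1, e2]
      push_cast; ring
    have h2 : ((T - u : ℝ) : ℂ) ^ ((q : ℂ) + p - 1) = (((T - u) ^ (p + q - 1) : ℝ) : ℂ) := by
      rw [Complex.ofReal_cpow ha.le]; push_cast; congr 1; ring
    rw [h1, h2] at h
    have := congrArg Complex.re h
    rwa [Complex.re_ofReal_mul, Complex.ofReal_re] at this
  have := intervalIntegral.integral_comp_sub_right (a := u) (b := T)
    (fun x => ((T - u) - x) ^ (p - 1) * x ^ (q - 1)) u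
  simp only [sub_self, sub_sub_sub_cancel_right] at this
  rw [this, h0]

lemma intervalIntegrable_beta_kernel {p q : ℝ} (hp : 0 < p) (hq : 0 < q) {u T : ℝ}
    (huT : u < T) :
    IntervalIntegrable (fun τ => (T - τ) ^ (p - 1) * (τ - u) ^ (q - 1)) volume u T := by
  refine intervalIntegral.intervalIntegrable_of_integral_ne_zero ?_
  rw [integral_beta_kernel hp hq huT]
  exact (mul_pos (Real.rpow_pos_of_pos (sub_pos.2 huT) _)
    (ProbabilityTheory.beta_pos hp hq)).ne'

/-! ### The semigroup law -/

/-- The restriction to the triangle `u < τ < T` of the product of the kernels of two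
Riemann-Liouville integrals, extended by zero. -/
noncomputable def triKernel (p q T τ u : ℝ) : ℝ :=
  if u < τ then (T - τ) ^ (p - 1) * (τ - u) ^ (q - 1) else 0

lemma measurable_triKernel (p q T : ℝ) :
    Measurable (fun z : ℝ × ℝ => triKernel p q T z.1 z.2) := by
  unfold triKernel
  refine Measurable.ite (measurableSet_lt measurable_snd measurable_fst) ?_ measurable_const
  fun_prop

lemma triKernel_nonneg {p q T τ u : ℝ} (hτ : τ ≤ T) : 0 ≤ triKernel p q T τ u := by
  unfold triKernel
  split_ifs with h
  · exact mul_nonneg (Real.rpow_nonneg (sub_nonneg.2 hτ) _)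
      (Real.rpow_nonneg (sub_nonneg.2 h.le) _)
  · exact le_rfl

lemma triKernel_section {p q T u : ℝ} :
    (fun τ => triKernel p q T τ u) =
      (Ioi u).indicator (fun τ => (T - τ) ^ (p - 1) * (τ - u) ^ (q - 1)) := by
  ext τ
  simp [triKernel, indicator]

lemma integrable_triKernel_section {p q : ℝ} (hp : 0 < p) (hq : 0 < q) {u T : ℝ}
    (hu : 0 ≤ u) (huT : u < T) :
    Integrable (fun τ => triKernel p q T τ u) (volume.restrict (Ioc 0 T)) := by
  rw [triKernel_section, integrable_indicator_iff measurableSet_Ioi, IntegrableOn,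
    Measure.restrict_restrict measurableSet_Ioi,
    show Ioi u ∩ Ioc 0 T = Ioc u T by
      ext x; simp only [mem_inter_iff, mem_Ioi, mem_Ioc]; grind]
  exact (intervalIntegrable_iff_integrableOn_Ioc_of_le huT.le).1
    (intervalIntegrable_beta_kernel hp hq huT)

lemma integral_triKernel_section {p q : ℝ} (hp : 0 < p) (hq : 0 < q) {u T : ℝ}
    (hu : 0 ≤ u) (huT : u < T) :
    ∫ τ in Ioc 0 T, triKernel p q T τ u =
      (T - u) ^ (p + q - 1) * ProbabilityTheory.beta p q := by
  rw [triKernel_section, integral_indicator measurableSet_Ioi,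
    Measure.restrict_restrict measurableSet_Ioi,
    show Ioi u ∩ Ioc 0 T = Ioc u T by
      ext x; simp only [mem_inter_iff, mem_Ioi, mem_Ioc]; grind,
    ← intervalIntegral.integral_of_le huT.le, integral_beta_kernel hp hq huT]

section Semigroup

variable {X : Type*} [NormedAddCommGroup X] [NormedSpace ℝ X]

lemma ae_lt_right (T : ℝ) : ∀ᵐ u ∂(volume.restrict (Ioc 0 T)), 0 < u ∧ u < T := by
  rw [← Measure.restrict_congr_set (Ioo_ae_eq_Ioc (a := (0:ℝ)) (b := T) (μ := volume))]
  exact ae_restrict_mem measurableSet_Ioo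

/-- For `p + q ≥ 1` the integral of the kernel over each vertical section is bounded, so the
double integrand defining `J^p J^q f` is integrable as soon as `f` is. -/
lemma integrable_triKernel_smul {p q : ℝ} (hp : 0 < p) (hq : 0 < q) (hpq : 1 ≤ p + q) {T : ℝ}
    {f : ℝ → X} (hf : IntegrableOn f (Ioc 0 T)) :
    Integrable (fun z : ℝ × ℝ => triKernel p q T z.1 z.2 • f z.2)
      ((volume.restrict (Ioc 0 T)).prod (volume.restrict (Ioc 0 T))) := by
  have hmeas : AEStronglyMeasurable (fun z : ℝ × ℝ => triKernel p q T z.1 z.2 • f z.2)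
      ((volume.restrict (Ioc 0 T)).prod (volume.restrict (Ioc 0 T))) :=
    (measurable_triKernel p q T).aestronglyMeasurable.smul hf.aestronglyMeasurable.comp_snd
  rw [integrable_prod_iff' hmeas]
  constructor
  · filter_upwards [ae_lt_right T] with u hu
    exact (integrable_triKernel_section hp hq hu.1.le hu.2).smul_const _
  · have hb : Integrable
        (fun u => ((T - u) ^ (p + q - 1) * ProbabilityTheory.beta p q) * ‖f u‖)
        (volume.restrict (Ioc 0 T)) := by
      refine hf.norm.bdd_mul (c := T ^ (p + q - 1) * ProbabilityTheory.beta p q)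
        (Measurable.aestronglyMeasurable (by fun_prop)) ?_
      filter_upwards [ae_lt_right T] with u hu
      have h1 : 0 ≤ (T - u) ^ (p + q - 1) := Real.rpow_nonneg (by linarith) _
      have h2 := (ProbabilityTheory.beta_pos hp hq).le
      rw [Real.norm_of_nonneg (mul_nonneg h1 h2)]
      refine mul_le_mul_of_nonneg_right ?_ h2
      exact Real.rpow_le_rpow (by linarith) (by linarith) (by linarith)
    refine hb.congr ?_
    filter_upwards [ae_lt_right T] with u hu
    rw [← integral_triKernel_section hp hq hu.1.le hu.2, ← integral_mul_const]
    refine setIntegral_congr_fun measurableSet_Ioc fun τ hτ => ?_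
    simp only [norm_smul, Real.norm_of_nonneg (triKernel_nonneg hτ.2)]

lemma integral_triKernel_smul_left {p q T : ℝ} {f : ℝ → X} {τ : ℝ} (hτ : τ ∈ Ioc 0 T) :
    ∫ u in Ioc 0 T, triKernel p q T τ u • f u =
      (T - τ) ^ (p - 1) • ∫ u in (0:ℝ)..τ, (τ - u) ^ (q - 1) • f u := by
  have h : (fun u => triKernel p q T τ u • f u) =
      (Iio τ).indicator (fun u => (T - τ) ^ (p - 1) • (τ - u) ^ (q - 1) • f u) := by
    ext u
    by_cases hu : u < τ <;> simp [triKernel, indicator, hu, mul_smul]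
  rw [h, integral_indicator measurableSet_Iio, Measure.restrict_restrict measurableSet_Iio,
    show Iio τ ∩ Ioc 0 T = Ioo 0 τ by
      ext x; simp only [mem_inter_iff, mem_Iio, mem_Ioc, mem_Ioo] at *; grind,
    integral_smul, intervalIntegral.integral_of_le hτ.1.le, integral_Ioc_eq_integral_Ioo]

lemma intervalIntegrable_RLint {p q : ℝ} (hp : 0 < p) (hq : 0 < q) (hpq : 1 ≤ p + q) {T : ℝ}
    (hT : 0 ≤ T) {f : ℝ → X} (hf : IntervalIntegrable f volume 0 T) :
    IntervalIntegrable (fun τ => (T - τ) ^ (p - 1) • RLint q τ f) volume 0 T := by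
  rw [intervalIntegrable_iff_integrableOn_Ioc_of_le hT] at hf ⊢
  have h := (integrable_triKernel_smul hp hq hpq hf).integral_prod_left
  refine (h.smul (Real.Gamma q)⁻¹).congr ?_
  filter_upwards [ae_restrict_mem measurableSet_Ioc] with τ hτ
  simp only [Pi.smul_apply, integral_triKernel_smul_left hτ, RLint]
  rw [smul_comm]

/-- The semigroup law `J^p J^q f = J^{p+q} f`. -/
lemma RLint_RLint [CompleteSpace X] {p q : ℝ} (hp : 0 < p) (hq : 0 < q) (hpq : 1 ≤ p + q) {T : ℝ}
    (hT : 0 ≤ T) {f : ℝ → X} (hf : IntervalIntegrable f volume 0 T) :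
    RLint p T (fun τ => RLint q τ f) = RLint (p + q) T f := by
  rw [intervalIntegrable_iff_integrableOn_Ioc_of_le hT] at hf
  have hint := integrable_triKernel_smul hp hq hpq hf
  have hswap := integral_integral_swap (f := fun τ u => triKernel p q T τ u • f u) hint
  have hL : ∫ τ in Ioc 0 T, ∫ u in Ioc 0 T, triKernel p q T τ u • f u =
      Real.Gamma q • ∫ τ in (0:ℝ)..T, (T - τ) ^ (p - 1) • RLint q τ f := by
    rw [intervalIntegral.integral_of_le hT, ← integral_smul]
    refine setIntegral_congr_fun measurableSet_Ioc fun τ hτ => ?_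
    simp only [integral_triKernel_smul_left hτ, RLint]
    rw [smul_comm (Real.Gamma q), smul_inv_smul₀ (Real.Gamma_pos_of_pos hq).ne']
  have hR : ∫ u in Ioc 0 T, ∫ τ in Ioc 0 T, triKernel p q T τ u • f u =
      ProbabilityTheory.beta p q • ∫ u in (0:ℝ)..T, (T - u) ^ (p + q - 1) • f u := by
    rw [intervalIntegral.integral_of_le hT, ← integral_smul]
    refine integral_congr_ae ?_
    filter_upwards [ae_lt_right T] with u hu
    rw [integral_smul_const, integral_triKernel_section hp hq hu.1.le hu.2, mul_comm, mul_smul]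
  rw [hL, hR] at hswap
  have hΓp := (Real.Gamma_pos_of_pos hp).ne'
  have hΓq := (Real.Gamma_pos_of_pos hq).ne'
  have hΓ := (Real.Gamma_pos_of_pos (add_pos hp hq)).ne'
  have h2 := congrArg (fun y => ((Real.Gamma p)⁻¹ * (Real.Gamma q)⁻¹) • y) hswap
  simp only [smul_smul, ProbabilityTheory.beta] at h2
  rw [RLint, RLint]
  convert h2 using 2 <;> field_simp

lemma RLint_one (T : ℝ) (f : ℝ → X) : RLint 1 T f = ∫ u in (0:ℝ)..T, f u := by
  simp [RLint]

end Semigroup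

/-! ### One half of the antisymmetric kernel -/

lemma intervalIntegrable_shift {X : Type*} [NormedAddCommGroup X] {f : ℝ → X}
    (hf : ∀ T, 0 ≤ T → IntervalIntegrable f volume 0 T) {s T : ℝ} (hs : 0 ≤ s) (hT : 0 ≤ T) :
    IntervalIntegrable (fun r => f (s + r)) volume 0 T := by
  have h : IntervalIntegrable f volume s (s + T) :=
    (hf s hs).symm.trans (hf (s + T) (by linarith))
  simpa using h.comp_add_left s

section KernelHalf

variable {X : Type*} [NormedAddCommGroup X] [NormedSpace ℝ X]

lemma intervalIntegrable_rpow_sub {p : ℝ} (hp : 0 < p) {T : ℝ} (hT : 0 < T) :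
    IntervalIntegrable (fun τ => (T - τ) ^ (p - 1)) volume 0 T := by
  simpa using intervalIntegrable_beta_kernel hp one_pos hT

lemma RLint_const [CompleteSpace X] {p : ℝ} (hp : 0 < p) {T : ℝ} (hT : 0 < T) (c : X) :
    RLint p T (fun _ => c) = (T ^ p / Real.Gamma (p + 1)) • c := by
  have h := integral_beta_kernel hp one_pos hT
  have hΓp := (Real.Gamma_pos_of_pos hp).ne'
  simp only [sub_self, Real.rpow_zero, mul_one, sub_zero, add_sub_cancel_right,
    ProbabilityTheory.beta, Real.Gamma_one] at h
  rw [RLint, intervalIntegral.integral_smul_const, h, smul_smul]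
  congr 1
  field_simp

lemma RLint_add {p T : ℝ} {f g : ℝ → X}
    (hf : IntervalIntegrable (fun τ => (T - τ) ^ (p - 1) • f τ) volume 0 T)
    (hg : IntervalIntegrable (fun τ => (T - τ) ^ (p - 1) • g τ) volume 0 T) :
    RLint p T (fun τ => f τ + g τ) = RLint p T f + RLint p T g := by
  simp only [RLint, smul_add]
  rw [intervalIntegral.integral_add hf hg, smul_add]

lemma RLint_sub {p T : ℝ} {f g : ℝ → X}
    (hf : IntervalIntegrable (fun τ => (T - τ) ^ (p - 1) • f τ) volume 0 T)
    (hg : IntervalIntegrable (fun τ => (T - τ) ^ (p - 1) • g τ) volume 0 T) :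
    RLint p T (fun τ => f τ - g τ) = RLint p T f - RLint p T g := by
  simp only [RLint, smul_sub]
  rw [intervalIntegral.integral_sub hf hg, smul_sub]

lemma intervalIntegrable_RLint_self {q : ℝ} (hq : 0 < q) {f : ℝ → X}
    (hf : ∀ T, 0 ≤ T → IntervalIntegrable f volume 0 T) {T : ℝ} (hT : 0 ≤ T) :
    IntervalIntegrable (fun τ => RLint q τ f) volume 0 T := by
  simpa using intervalIntegrable_RLint one_pos hq (by linarith) hT (hf T hT)

lemma integral_shift {f : ℝ → X}
    (hf : ∀ T, 0 ≤ T → IntervalIntegrable f volume 0 T) {s T : ℝ} (hs : 0 ≤ s) (hT : 0 ≤ T) :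
    ∫ r in (0:ℝ)..T, f (s + r) = (∫ r in (0:ℝ)..(s + T), f r) - ∫ r in (0:ℝ)..s, f r := by
  rw [intervalIntegral.integral_comp_add_left, add_zero, eq_sub_iff_add_eq, add_comm]
  exact intervalIntegral.integral_add_adjacent_intervals (hf s hs)
    ((hf s hs).symm.trans (hf (s + T) (by linarith)))

variable [CompleteSpace X]

lemma RLint_two_shift {f : ℝ → X} (hf : ∀ T, 0 ≤ T → IntervalIntegrable f volume 0 T)
    {s ρ : ℝ} (hs : 0 ≤ s) (hρ : 0 ≤ ρ) :
    RLint 2 (s + ρ) f = RLint 2 s f + RLint 1 ρ (fun r => RLint 1 (s + r) f) := by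
  have key : ∀ T, 0 ≤ T → RLint 2 T f = ∫ r in (0:ℝ)..T, RLint 1 r f := fun T hT => by
    rw [← RLint_one, RLint_RLint one_pos one_pos (by norm_num) hT (hf T hT)]
    norm_num
  rw [key _ hs, key _ (add_nonneg hs hρ), RLint_one,
    integral_shift (fun T hT => intervalIntegrable_RLint_self one_pos hf hT) hs hρ]
  abel

/-- The full integral `∫₀^{s+ρ} (s+ρ-τ)^{1-α} J^α f(τ) dτ` is `Γ(2-α) J² f(s+ρ)`; removing the
part over `[s, s+ρ]`, itself a fractional integral of the shifted function, leaves the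
integral over `[0, s]`. -/
lemma inner_integral {α : ℝ} (hα : α ∈ Ioo (1:ℝ) 2) {f : ℝ → X}
    (hf : ∀ T, 0 ≤ T → IntervalIntegrable f volume 0 T) {s ρ : ℝ} (hs : 0 ≤ s) (hρ : 0 ≤ ρ) :
    ∫ τ in (0:ℝ)..s, (s + ρ - τ) ^ (1 - α) • RLint α τ f =
      Real.Gamma (2 - α) • (RLint 2 s f + RLint 1 ρ (fun r => RLint 1 (s + r) f) -
        RLint (2 - α) ρ (fun r => RLint α (s + r) f)) := by
  have hp : 0 < 2 - α := by linarith [hα.2]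
  have hq : 0 < α := by linarith [hα.1]
  have hΓ := (Real.Gamma_pos_of_pos hp).ne'
  have hT : 0 ≤ s + ρ := add_nonneg hs hρ
  have hint := intervalIntegrable_RLint hp hq (by linarith) hT (hf _ hT)
  have hsg := RLint_RLint hp hq (by linarith) hT (hf _ hT)
  rw [show 2 - α - 1 = 1 - α by ring] at hint
  rw [sub_add_cancel, RLint_two_shift hf hs hρ] at hsg
  rw [← hsg, RLint, RLint, ← smul_sub, smul_inv_smul₀ hΓ, show 2 - α - 1 = 1 - α by ring]
  have h1 : IntervalIntegrable (fun τ => (s + ρ - τ) ^ (1 - α) • RLint α τ f) volume 0 s :=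
    hint.mono_set (by
      rw [uIcc_of_le hs, uIcc_of_le hT]; exact Icc_subset_Icc_right (by linarith))
  have h2 : IntervalIntegrable (fun τ => (s + ρ - τ) ^ (1 - α) • RLint α τ f) volume s (s + ρ) :=
    h1.symm.trans hint
  rw [← intervalIntegral.integral_add_adjacent_intervals h1 h2, eq_sub_iff_add_eq]
  congr 1
  have := intervalIntegral.integral_comp_add_left (a := 0) (b := ρ)
    (fun τ => (s + ρ - τ) ^ (1 - α) • RLint α τ f) s
  simpa using this

/-- After `inner_integral`, the outer integral is `J^{α-1}` at `t` of a sum of a constant and two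
fractional integrals, each evaluated by the semigroup law. -/
lemma double_integral_sum {α : ℝ} (hα : α ∈ Ioo (1:ℝ) 2) {f : ℝ → X}
    (hf : ∀ T, 0 ≤ T → IntervalIntegrable f volume 0 T) {t s : ℝ} (ht : 0 < t) (hs : 0 < s) :
    ∫ σ in (0:ℝ)..t, ∫ τ in (0:ℝ)..s,
        (t + s - σ - τ) ^ (1 - α) • (σ ^ (α - 2) / Real.Gamma (α - 1)) • RLint α τ f =
      Real.Gamma (2 - α) • ((t ^ (α - 1) / Real.Gamma α) • RLint 2 s f +
        RLint α t (fun r => RLint 1 (s + r) f) -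
        ((∫ τ in (0:ℝ)..(s + t), RLint α τ f) - ∫ τ in (0:ℝ)..s, RLint α τ f)) := by
  have hp : 0 < 2 - α := by linarith [hα.2]
  have hq : 0 < α := by linarith [hα.1]
  have hr : 0 < α - 1 := by linarith [hα.1]
  have hF : ∀ T, 0 ≤ T → IntervalIntegrable (fun τ => RLint 1 τ f) volume 0 T :=
    fun T hT => intervalIntegrable_RLint_self one_pos hf hT
  have hH : ∀ T, 0 ≤ T → IntervalIntegrable (fun τ => RLint α τ f) volume 0 T :=
    fun T hT => intervalIntegrable_RLint_self hq hf hT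
  have hFs := intervalIntegrable_shift hF hs.le ht.le
  have hHs := intervalIntegrable_shift hH hs.le ht.le
  have hα2 : α - 1 - 1 = α - 2 := by ring
  have hRL : RLint (α - 1) t (fun ρ => RLint 2 s f + RLint 1 ρ (fun r => RLint 1 (s + r) f) -
        RLint (2 - α) ρ (fun r => RLint α (s + r) f)) =
      (t ^ (α - 1) / Real.Gamma α) • RLint 2 s f +
        RLint α t (fun r => RLint 1 (s + r) f) -
        ((∫ τ in (0:ℝ)..(s + t), RLint α τ f) - ∫ τ in (0:ℝ)..s, RLint α τ f) := by
    have i1 : IntervalIntegrable (fun τ => (t - τ) ^ (α - 1 - 1) • RLint 2 s f) volume 0 t :=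
      by
      rw [intervalIntegrable_iff_integrableOn_Ioc_of_le ht.le]
      exact Integrable.smul_const ((intervalIntegrable_iff_integrableOn_Ioc_of_le ht.le).1
        (intervalIntegrable_rpow_sub hr ht)) _
    have i2 := intervalIntegrable_RLint hr one_pos (by linarith) ht.le hFs
    have i3 := intervalIntegrable_RLint hr hp (by linarith) ht.le hHs
    have i12 := i1.add i2
    simp only [← smul_add] at i12
    rw [RLint_sub (by simpa [smul_add] using i12) i3, RLint_add i1 i2, RLint_const hr ht,
      RLint_RLint hr one_pos (by linarith) ht.le hFs, RLint_RLint hr hp (by linarith) ht.le hHs,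
      sub_add_cancel, show α - 1 + (2 - α) = 1 by ring, RLint_one,
      integral_shift hH hs.le ht.le]
  rw [← hRL, RLint]
  have hrefl := intervalIntegral.integral_comp_sub_left (a := 0) (b := t)
    (fun ρ => (t - ρ) ^ (α - 1 - 1) • (RLint 2 s f + RLint 1 ρ (fun r => RLint 1 (s + r) f) -
        RLint (2 - α) ρ (fun r => RLint α (s + r) f))) t
  simp only [sub_self, sub_zero, sub_sub_cancel] at hrefl
  rw [← hrefl, smul_smul, ← intervalIntegral.integral_smul]
  refine intervalIntegral.integral_congr fun σ hσ => ?_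
  rw [uIcc_of_le ht.le] at hσ
  have hin := inner_integral hα hf hs.le (sub_nonneg.2 hσ.2)
  have e : ∀ τ, (t + s - σ - τ) ^ (1 - α) • (σ ^ (α - 2) / Real.Gamma (α - 1)) • RLint α τ f =
      (σ ^ (α - 2) / Real.Gamma (α - 1)) • (s + (t - σ) - τ) ^ (1 - α) • RLint α τ f := fun τ => by
    rw [smul_comm, show t + s - σ - τ = s + (t - σ) - τ by ring]
  simp only [e]
  rw [intervalIntegral.integral_smul, hin, smul_smul, smul_smul, hα2]
  congr 1
  ring

lemma double_integral_left {α : ℝ} (hα : α ∈ Ioo (1:ℝ) 2) (h : ℝ → X) {t s : ℝ} (ht : 0 < t) :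
    ∫ σ in (0:ℝ)..t, ∫ τ in (0:ℝ)..s,
        (t - σ) ^ (1 - α) • (σ ^ (α - 2) / Real.Gamma (α - 1)) • h τ =
      Real.Gamma (2 - α) • ∫ τ in (0:ℝ)..s, h τ := by
  have hp : 0 < 2 - α := by linarith [hα.2]
  have hr : 0 < α - 1 := by linarith [hα.1]
  have hΓ := (Real.Gamma_pos_of_pos hr).ne'
  have hb := integral_beta_kernel hp hr ht
  simp only [sub_zero, show 2 - α + (α - 1) = 1 by ring, sub_self, Real.rpow_zero, one_mul,
    ProbabilityTheory.beta, Real.Gamma_one, div_one,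
    show 2 - α - 1 = 1 - α by ring, show α - 1 - 1 = α - 2 by ring] at hb
  simp only [intervalIntegral.integral_smul, smul_smul]
  rw [intervalIntegral.integral_smul_const]
  simp only [← mul_div_assoc]
  rw [intervalIntegral.integral_div, hb, mul_div_cancel_right₀ _ hΓ]

lemma double_integral_right {α : ℝ} (hα : α ∈ Ioo (1:ℝ) 2) {f : ℝ → X}
    (hf : ∀ T, 0 ≤ T → IntervalIntegrable f volume 0 T) {t s : ℝ} (hs : 0 < s) :
    ∫ σ in (0:ℝ)..t, ∫ τ in (0:ℝ)..s,
        (s - τ) ^ (1 - α) • (σ ^ (α - 2) / Real.Gamma (α - 1)) • RLint α τ f =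
      Real.Gamma (2 - α) • (t ^ (α - 1) / Real.Gamma α) • RLint 2 s f := by
  have hr : 0 < α - 1 := by linarith [hα.1]
  have hΓ := (Real.Gamma_pos_of_pos hr).ne'
  have hin := inner_integral hα hf hs.le le_rfl
  have z1 : ∀ (p : ℝ) (f : ℝ → X), RLint p 0 f = 0 := fun p f => by simp [RLint]
  rw [z1, z1, add_zero, add_zero, sub_zero] at hin
  have hpow : ∫ σ in (0:ℝ)..t, σ ^ (α - 2) = t ^ (α - 1) / (α - 1) := by
    rw [integral_rpow (Or.inl (by linarith)), show α - 2 + 1 = α - 1 by ring,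
      Real.zero_rpow hr.ne', sub_zero]
  have hG : Real.Gamma α = (α - 1) * Real.Gamma (α - 1) := by
    rw [← Real.Gamma_add_one hr.ne', sub_add_cancel]
  have e : ∀ σ τ, (s - τ) ^ (1 - α) • (σ ^ (α - 2) / Real.Gamma (α - 1)) • RLint α τ f =
      (σ ^ (α - 2) / Real.Gamma (α - 1)) • (s - τ) ^ (1 - α) • RLint α τ f := fun σ τ =>
    smul_comm _ _ _
  simp only [e, intervalIntegral.integral_smul, hin]
  rw [intervalIntegral.integral_smul_const, intervalIntegral.integral_div, hpow, smul_comm, hG,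
    div_div]

/-- The contribution of the summand `σ^{α-2}/Γ(α-1) · J^α f(τ)` of the kernel to the left-hand
side. Its first term is symmetric in `(t, s)`, so it cancels after antisymmetrization. -/
lemma half_identity {α : ℝ} (hα : α ∈ Ioo (1:ℝ) 2) {f : ℝ → X}
    (hf : ∀ T, 0 ≤ T → IntervalIntegrable f volume 0 T) {t s : ℝ} (ht : 0 < t) (hs : 0 < s) :
    (∫ σ in (0:ℝ)..t, ∫ τ in (0:ℝ)..s,
        (t - σ) ^ (1 - α) • (σ ^ (α - 2) / Real.Gamma (α - 1)) • RLint α τ f) +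
    (∫ σ in (0:ℝ)..t, ∫ τ in (0:ℝ)..s,
        (s - τ) ^ (1 - α) • (σ ^ (α - 2) / Real.Gamma (α - 1)) • RLint α τ f) -
    (∫ σ in (0:ℝ)..t, ∫ τ in (0:ℝ)..s,
        (t + s - σ - τ) ^ (1 - α) • (σ ^ (α - 2) / Real.Gamma (α - 1)) • RLint α τ f) =
      Real.Gamma (2 - α) • ((∫ τ in (0:ℝ)..(t + s), RLint α τ f) -
        RLint α t (fun r => RLint 1 (s + r) f)) := by
  rw [double_integral_left hα _ ht, double_integral_right hα hf hs,
    double_integral_sum hα hf ht hs, ← smul_add, ← smul_sub, add_comm s t]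
  congr 1
  abel

end KernelHalf

/-! ### Antisymmetrization -/

section Antisymmetrization

variable {X : Type*} [NormedAddCommGroup X] [NormedSpace ℝ X]

/-- Fubini turns the second half of an antisymmetric kernel into the first half with the two
variables, and the two sides of the rectangle, exchanged. -/
lemma integral_antisymm {w : ℝ → ℝ → ℝ} {a : ℝ → ℝ} {h : ℝ → X} {t s : ℝ}
    (ht : 0 ≤ t) (hs : 0 ≤ s)
    (h1 : Integrable (fun z : ℝ × ℝ => w z.1 z.2 • a z.1 • h z.2)
      ((volume.restrict (Ioc 0 t)).prod (volume.restrict (Ioc 0 s))))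
    (h2 : Integrable (fun z : ℝ × ℝ => w z.2 z.1 • a z.1 • h z.2)
      ((volume.restrict (Ioc 0 s)).prod (volume.restrict (Ioc 0 t)))) :
    ∫ σ in (0:ℝ)..t, ∫ τ in (0:ℝ)..s, w σ τ • (a σ • h τ - a τ • h σ) =
      (∫ σ in (0:ℝ)..t, ∫ τ in (0:ℝ)..s, w σ τ • a σ • h τ) -
      ∫ σ in (0:ℝ)..s, ∫ τ in (0:ℝ)..t, w τ σ • a σ • h τ := by
  simp only [intervalIntegral.integral_of_le ht, intervalIntegral.integral_of_le hs, smul_sub]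
  rw [integral_integral_swap (f := fun σ τ => w τ σ • a σ • h τ) h2]
  exact integral_integral_sub h1 h2.swap

variable {α : ℝ} {f : ℝ → X}

lemma integrableOn_kernel (hα : α ∈ Ioo (1:ℝ) 2) {t : ℝ} (ht : 0 < t) :
    IntegrableOn (fun σ : ℝ => σ ^ (α - 2) / Real.Gamma (α - 1)) (Ioc 0 t) :=
  ((intervalIntegrable_iff_integrableOn_Ioc_of_le ht.le).1
    (intervalIntegral.intervalIntegrable_rpow' (by linarith [hα.1]))).div_const _

lemma integrable_left (hα : α ∈ Ioo (1:ℝ) 2)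
    (hf : ∀ T, 0 ≤ T → IntervalIntegrable f volume 0 T) {t s : ℝ} (ht : 0 < t) (hs : 0 < s) :
    Integrable (fun z : ℝ × ℝ =>
        (t - z.1) ^ (1 - α) • (z.1 ^ (α - 2) / Real.Gamma (α - 1)) • RLint α z.2 f)
      ((volume.restrict (Ioc 0 t)).prod (volume.restrict (Ioc 0 s))) := by
  have hp : 0 < 2 - α := by linarith [hα.2]
  have hr : 0 < α - 1 := by linarith [hα.1]
  have h1 := ((intervalIntegrable_iff_integrableOn_Ioc_of_le ht.le).1
    (intervalIntegrable_beta_kernel hp hr ht)).div_const (Real.Gamma (α - 1))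
  have h2 := (intervalIntegrable_iff_integrableOn_Ioc_of_le hs.le).1
    (intervalIntegrable_RLint_self (by linarith : 0 < α) hf hs.le)
  refine (Integrable.smul_prod h1 h2).congr (Eventually.of_forall fun z => ?_)
  simp only [sub_zero, smul_smul, show 2 - α - 1 = 1 - α by ring, show α - 1 - 1 = α - 2 by ring,
    mul_div_assoc]

lemma integrable_right (hα : α ∈ Ioo (1:ℝ) 2)
    (hf : ∀ T, 0 ≤ T → IntervalIntegrable f volume 0 T) {t s : ℝ} (ht : 0 < t) (hs : 0 < s) :
    Integrable (fun z : ℝ × ℝ =>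
        (s - z.2) ^ (1 - α) • (z.1 ^ (α - 2) / Real.Gamma (α - 1)) • RLint α z.2 f)
      ((volume.restrict (Ioc 0 t)).prod (volume.restrict (Ioc 0 s))) := by
  have hp : 0 < 2 - α := by linarith [hα.2]
  have hq : 0 < α := by linarith [hα.1]
  have h2 := (intervalIntegrable_iff_integrableOn_Ioc_of_le hs.le).1
    (intervalIntegrable_RLint hp hq (by linarith) hs.le (hf s hs.le))
  refine (Integrable.smul_prod (integrableOn_kernel hα ht) h2).congr
    (Eventually.of_forall fun z => ?_)
  simp only [show 2 - α - 1 = 1 - α by ring]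
  rw [smul_comm]

/-- Since `1 - α < 0`, the weight `(t+s-σ-τ)^{1-α}` is dominated by `(s-τ)^{1-α}`. -/
lemma integrable_sum (hα : α ∈ Ioo (1:ℝ) 2)
    (hf : ∀ T, 0 ≤ T → IntervalIntegrable f volume 0 T) {t s : ℝ} (ht : 0 < t) (hs : 0 < s) :
    Integrable (fun z : ℝ × ℝ =>
        (t + s - z.1 - z.2) ^ (1 - α) • (z.1 ^ (α - 2) / Real.Gamma (α - 1)) • RLint α z.2 f)
      ((volume.restrict (Ioc 0 t)).prod (volume.restrict (Ioc 0 s))) := by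
  have h2 := (intervalIntegrable_iff_integrableOn_Ioc_of_le hs.le).1
    (intervalIntegrable_RLint_self (by linarith [hα.1] : 0 < α) hf hs.le)
  have hm := (Integrable.smul_prod (integrableOn_kernel hα ht) h2).aestronglyMeasurable
  have hw : Measurable (fun z : ℝ × ℝ => (t + s - z.1 - z.2) ^ (1 - α)) := by fun_prop
  refine (integrable_right hα hf ht hs).mono (hw.aestronglyMeasurable.smul hm) ?_
  have h1 : ∀ᵐ z ∂((volume.restrict (Ioc (0:ℝ) t)).prod (volume.restrict (Ioc (0:ℝ) s))),
      z.1 ≤ t := by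
    refine Measure.quasiMeasurePreserving_fst.ae (p := fun σ : ℝ => σ ≤ t) ?_
    filter_upwards [ae_lt_right t] with σ hσ using hσ.2.le
  have h2 : ∀ᵐ z ∂((volume.restrict (Ioc (0:ℝ) t)).prod (volume.restrict (Ioc (0:ℝ) s))),
      z.2 < s := by
    refine Measure.quasiMeasurePreserving_snd.ae (p := fun τ : ℝ => τ < s) ?_
    filter_upwards [ae_lt_right s] with τ hτ using hτ.2
  filter_upwards [h1, h2] with z hz1 hz2
  rw [norm_smul, norm_smul _ (_ • _)]
  refine mul_le_mul_of_nonneg_right ?_ (norm_nonneg _)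
  have hpos : 0 < s - z.2 := sub_pos.2 hz2
  rw [Real.norm_of_nonneg (Real.rpow_nonneg (by linarith) _),
    Real.norm_of_nonneg (Real.rpow_nonneg hpos.le _)]
  exact Real.rpow_le_rpow_of_nonpos hpos (by linarith) (by linarith [hα.1])

end Antisymmetrization

/-! ### Integrability of the orbits -/

lemma intervalIntegrable_orbit {X : Type*} [NormedAddCommGroup X] [NormedSpace ℝ X]
    {α : ℝ} (hα : 1 < α) {b : ℝ} (hb : 0 < b) {f : ℝ → X} {y : X}
    (hcont : ContinuousOn f (Ioc (0:ℝ) b))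
    (hlim : Tendsto (fun t : ℝ => t ^ (2 - α) • f t) (𝓝[>] (0:ℝ)) (𝓝 y))
    (htrunc : ∀ t > b, f t = 0) (T : ℝ) (hT : 0 ≤ T) :
    IntervalIntegrable f volume 0 T := by
  rw [intervalIntegrable_iff_integrableOn_Ioc_of_le hT]
  -- Near zero `f` is dominated by a multiple of `t ^ (α - 2)`.
  have hev : ∀ᶠ t in 𝓝[>] (0:ℝ), ‖t ^ (2 - α) • f t‖ ≤ ‖y‖ + 1 :=
    (hlim.norm.eventually_lt_const (lt_add_one _)).mono fun _ h => h.le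
  obtain ⟨δ, hδ, hδs⟩ := (mem_nhdsGT_iff_exists_Ioc_subset).1 hev
  have hδ0 : (0:ℝ) < δ := hδ
  have hmeas : AEStronglyMeasurable f (volume.restrict (Ioc 0 b)) :=
    hcont.aestronglyMeasurable measurableSet_Ioc
  have hnear : IntegrableOn f (Ioc 0 (min δ b)) := by
    have hdom : IntegrableOn (fun t : ℝ => (‖y‖ + 1) * t ^ (α - 2)) (Ioc 0 δ) :=
      ((intervalIntegrable_iff_integrableOn_Ioc_of_le hδ0.le).1
        (intervalIntegral.intervalIntegrable_rpow' (by linarith))).const_mul _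
    refine Integrable.mono' (hdom.mono_set (Ioc_subset_Ioc_right (min_le_left _ _)))
      (hmeas.mono_measure (Measure.restrict_mono (Ioc_subset_Ioc_right (min_le_right _ _)) le_rfl))
      ?_
    filter_upwards [ae_restrict_mem measurableSet_Ioc] with t ht
    have h1 : ‖t ^ (2 - α) • f t‖ ≤ ‖y‖ + 1 := hδs ⟨ht.1, ht.2.trans (min_le_left _ _)⟩
    have hpos : 0 < t ^ (2 - α) := Real.rpow_pos_of_pos ht.1 _
    rw [norm_smul, Real.norm_of_nonneg hpos.le] at h1
    rw [show α - 2 = -(2 - α) by ring, Real.rpow_neg ht.1.le, ← div_eq_mul_inv, le_div_iff₀ hpos]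
    linarith
  have hmid : IntegrableOn f (Icc (min δ b) b) :=
    (hcont.mono fun t ht => ⟨lt_of_lt_of_le (lt_min hδ0 hb) ht.1, ht.2⟩).integrableOn_Icc
  have hfar : IntegrableOn f (Ioi b) :=
    integrableOn_zero.congr_fun (fun t ht => (htrunc t ht).symm) measurableSet_Ioi
  refine ((hnear.union hmid).union hfar).mono_set fun t ht => ?_
  simp only [mem_union, mem_Ioc, mem_Icc, mem_Ioi]
  grind [ht.1]

/-! ### The identity -/

/-- For a truncated strongly continuous family `g` with
`lim_{t→0+} t^{2-α} g(t)x = x/Γ(α-1)`, setting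
`K(σ,τ)x = (σ^{α-2}/Γ(α-1)) J_τ^α g(τ)x − (τ^{α-2}/Γ(α-1)) J_σ^α g(σ)x` and
`L(t,s)x = Γ(2-α) ∫_0^{t+s} g(σ)x dσ`, one has
`∬ (t-σ)^{1-α} K + ∬ (s-τ)^{1-α} K − ∬ (t+s-σ-τ)^{1-α} K = (J_s^α − J_t^α) L`. -/
theorem truncated_kernel_identity
    {X : Type*} [NormedAddCommGroup X] [NormedSpace ℝ X] [CompleteSpace X]
    (α : ℝ) (hα : α ∈ Set.Ioo (1:ℝ) 2) (b : ℝ) (hb : 0 < b)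
    (g : ℝ → X →L[ℝ] X)
    (hcont : ∀ x : X, ContinuousOn (fun t => g t x) (Set.Ioc (0:ℝ) b))
    (hlim : ∀ x : X, Tendsto (fun t : ℝ => t ^ (2 - α) • g t x) (𝓝[>] (0:ℝ))
      (𝓝 ((Real.Gamma (α - 1))⁻¹ • x)))
    (htrunc : ∀ t > b, g t = 0)
    (K : ℝ → ℝ → X → X)
    (hK : ∀ (σ τ : ℝ) (x : X), K σ τ x =
      (σ ^ (α - 2) / Real.Gamma (α - 1)) • RLint α τ (fun u => g u x) -
      (τ ^ (α - 2) / Real.Gamma (α - 1)) • RLint α σ (fun u => g u x))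
    (L : ℝ → ℝ → X → X)
    (hL : ∀ (t s : ℝ) (x : X), L t s x =
      Real.Gamma (2 - α) • ∫ σ in (0:ℝ)..(t + s), g σ x) :
    ∀ x : X, ∀ t > (0:ℝ), ∀ s > (0:ℝ),
      (∫ σ in (0:ℝ)..t, ∫ τ in (0:ℝ)..s, (t - σ) ^ (1 - α) • K σ τ x) +
      (∫ σ in (0:ℝ)..t, ∫ τ in (0:ℝ)..s, (s - τ) ^ (1 - α) • K σ τ x) -
      (∫ σ in (0:ℝ)..t, ∫ τ in (0:ℝ)..s, (t + s - σ - τ) ^ (1 - α) • K σ τ x) =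
        (Real.Gamma α)⁻¹ • (∫ r in (0:ℝ)..s, (s - r) ^ (α - 1) • L t r x) -
        (Real.Gamma α)⁻¹ • (∫ r in (0:ℝ)..t, (t - r) ^ (α - 1) • L r s x) := by
  intro x t ht s hs
  have hf : ∀ T, 0 ≤ T → IntervalIntegrable (fun u => g u x) volume 0 T :=
    intervalIntegrable_orbit hα.1 hb (hcont x) (hlim x) (fun u hu => by simp [htrunc u hu])
  let a : ℝ → ℝ := fun σ => σ ^ (α - 2) / Real.Gamma (α - 1)
  let h : ℝ → X := fun τ => RLint α τ (fun u => g u x)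
  have e1 := integral_antisymm (w := fun σ _ => (t - σ) ^ (1 - α))
    (a := a) (h := h) ht.le hs.le
    (integrable_left hα hf ht hs) (integrable_right hα hf hs ht)
  have e2 := integral_antisymm (w := fun _ τ => (s - τ) ^ (1 - α))
    (a := a) (h := h) ht.le hs.le
    (integrable_right hα hf ht hs) (integrable_left hα hf hs ht)
  have hcomm : ∀ σ τ : ℝ, t + s - τ - σ = s + t - σ - τ := fun σ τ => by ring
  have e3 := integral_antisymm (w := fun σ τ => (t + s - σ - τ) ^ (1 - α))
    (a := a) (h := h) ht.le hs.le
    (integrable_sum hα hf ht hs) (by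
      simpa only [hcomm] using integrable_sum hα hf hs ht)
  simp only [a, h] at e1 e2 e3
  have hts := half_identity hα hf ht hs
  have hst := half_identity hα hf hs ht
  simp only [← hcomm] at hst
  have hR : ∀ t s : ℝ, (Real.Gamma α)⁻¹ • (∫ r in (0:ℝ)..s, (s - r) ^ (α - 1) • L t r x) =
      Real.Gamma (2 - α) • RLint α s (fun r => RLint 1 (t + r) (fun u => g u x)) := fun t s => by
    simp only [hL, RLint_one]
    simp only [RLint, smul_comm _ (Real.Gamma (2 - α)), intervalIntegral.integral_smul]
  have hR2 : (∫ r in (0:ℝ)..t, (t - r) ^ (α - 1) • L r s x) =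
      ∫ r in (0:ℝ)..t, (t - r) ^ (α - 1) • L s r x := by
    simp only [hL, add_comm]
  simp only [hK]
  rw [e1, e2, e3, hR2, hR, hR]
  rw [add_comm s t, smul_sub] at hst
  rw [smul_sub] at hts
  linear_combination (norm := abel) hts - hst
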